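/- arXiv:1205.4380 — 2 statements merged into one kernel-verified Lean document; each statement's English description precedes it below -/
import Mathlib

section
/- Let N ≥ 1 and let A be an N×N matrix over ℂ. Define the formal power series ζ_A(z) = exp(Σ_{m=1}^∞ (sum(A^m)/m) z^m) in ℂ[[z]]. Then the formal derivative of ζ_A satisfies ζ_A′(z) · det(E − A·z) = ζ_A(z) · sum(adj(E − A·z)·A) as an identity of formal power series. -/
open PowerSeries Matrix

/-- The formal exponential `exp(S) = Σ_{n=0}^∞ S^n / n!` of a formal power series `S` over `ℂ`
(with zero constant coefficient), given by its standard coefficientwise formula: since `S` has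
zero constant term, `S^n` contributes to the coefficient of `z^k` only for `n ≤ k`. -/
noncomputable def PowerSeries.expOf (S : PowerSeries ℂ) : PowerSeries ℂ :=
  PowerSeries.mk fun k =>
    ∑ n ∈ Finset.range (k + 1), (n.factorial : ℂ)⁻¹ * PowerSeries.coeff (R := ℂ) k (S ^ n)

theorem PowerSeries.expOf_eq_subst (S : PowerSeries ℂ) (hS : constantCoeff S = 0) :
    PowerSeries.expOf S = (PowerSeries.exp ℂ).subst S := by
  ext k
  rw [coeff_subst' (HasSubst.of_constantCoeff_zero' hS), PowerSeries.expOf, coeff_mk,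
    finsum_eq_sum_of_support_subset (s := Finset.range (k + 1))]
  · refine Finset.sum_congr rfl fun n _ => ?_
    simp [coeff_exp]
  · intro n hn
    by_contra h
    apply hn
    have hk : k < n := by simpa using h
    have hz : coeff k (S ^ n) = 0 := by
      apply coeff_of_lt_order
      refine lt_of_lt_of_le ?_ (le_order_pow_of_constantCoeff_eq_zero n hS)
      exact_mod_cast hk
    simp [hz]

theorem one_sub_mul_gen (N : ℕ) (A : Matrix (Fin N) (Fin N) ℂ) :
    ((1 : Matrix (Fin N) (Fin N) ℂ⟦X⟧) - (PowerSeries.X : ℂ⟦X⟧) • A.map (PowerSeries.C (R := ℂ))) *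
      (Matrix.of fun i j => PowerSeries.mk fun n => (A ^ (n + 1)) i j) =
      A.map (PowerSeries.C (R := ℂ)) := by
  rw [sub_mul, one_mul, smul_mul_assoc]
  ext i j n
  cases n with
  | zero => simp
  | succ n =>
    simp only [Matrix.sub_apply, Matrix.smul_apply, smul_eq_mul, map_sub, coeff_succ_X_mul,
      Matrix.mul_apply, map_sum, Matrix.of_apply, Matrix.map_apply, coeff_C_mul, coeff_mk]
    rw [pow_succ' A (n + 1), Matrix.mul_apply, sub_self]
    simp [coeff_C]

/-- Let `A` be an `N × N` complex matrix (`N ≥ 1`) and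
`ζ_A(z) = exp(Σ_{m=1}^∞ (sum(A^m)/m) z^m)` in `ℂ⟦z⟧`. Then
`ζ_A' (z) · det(E - A·z) = ζ_A(z) · sum(adj(E - A·z)·A)` as formal power series. -/
theorem zeta_derivative_mul_det_eq
    (N : ℕ) (hN : 1 ≤ N) (A : Matrix (Fin N) (Fin N) ℂ) :
    (PowerSeries.derivative ℂ
        (PowerSeries.expOf (PowerSeries.mk fun m =>
          if m = 0 then 0 else (∑ i, ∑ j, (A ^ m) i j) / m))) *
      Matrix.det ((1 : Matrix (Fin N) (Fin N) ℂ⟦X⟧) -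
        (PowerSeries.X : ℂ⟦X⟧) • A.map (PowerSeries.C (R := ℂ))) =
    (PowerSeries.expOf (PowerSeries.mk fun m =>
        if m = 0 then 0 else (∑ i, ∑ j, (A ^ m) i j) / m)) *
      ∑ i, ∑ j, (Matrix.adjugate ((1 : Matrix (Fin N) (Fin N) ℂ⟦X⟧) -
          (PowerSeries.X : ℂ⟦X⟧) • A.map (PowerSeries.C (R := ℂ))) * A.map (PowerSeries.C (R := ℂ))) i j := by
  have h0 : constantCoeff (PowerSeries.mk fun m : ℕ =>
      if m = 0 then (0 : ℂ) else (∑ i, ∑ j, (A ^ m) i j) / m) = 0 := by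
    simp [← coeff_zero_eq_constantCoeff_apply]
  have hD : PowerSeries.derivative ℂ (PowerSeries.mk fun m : ℕ =>
      if m = 0 then (0 : ℂ) else (∑ i, ∑ j, (A ^ m) i j) / m) =
      ∑ i, ∑ j, PowerSeries.mk fun n => (A ^ (n + 1)) i j := by
    ext n
    have hn : (n : ℂ) + 1 ≠ 0 := by exact_mod_cast n.succ_ne_zero
    simp only [coeff_derivative, coeff_mk, map_sum]
    rw [if_neg n.succ_ne_zero]
    push_cast
    field_simp
  rw [PowerSeries.expOf_eq_subst _ h0, derivative_subst (HasSubst.of_constantCoeff_zero' h0),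
    derivative_exp, hD, mul_assoc]
  congr 1
  have key := congrArg (fun M => Matrix.adjugate ((1 : Matrix (Fin N) (Fin N) ℂ⟦X⟧) -
    (PowerSeries.X : ℂ⟦X⟧) • A.map (PowerSeries.C (R := ℂ))) * M) (one_sub_mul_gen N A)
  simp only [← mul_assoc, Matrix.adjugate_mul] at key
  rw [← key]
  simp only [smul_mul_assoc, one_mul, Matrix.smul_apply, smul_eq_mul, Matrix.of_apply,
    Finset.sum_mul]
  refine Finset.sum_congr rfl fun i _ => Finset.sum_congr rfl fun j _ => mul_comm _ _
end

section
/- Let N ≥ 1 and let A be an N×N matrix over ℂ with det A ≠ 0. Suppose α_1, …, α_n are pairwise distinct nonzero complex numbers and e_1, …, e_n ≥ 1 are integers such that det(E − A·z) = (−1)^N · det A · Π_{k=1}^n (z − α_k)^{e_k} as polynomials in z, and suppose A_{k,j} (for 1 ≤ k ≤ n, 1 ≤ j ≤ e_k) are complex numbers such that for every complex z ∉ {α_1, …, α_n}: sum(adj(E − A·z)·A)/det(E − A·z) = (1/((−1)^N det A)) · Σ_{k=1}^n Σ_{j=1}^{e_k} A_{k,j}/(z − α_k)^j. Then for every complex number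 z with |z| < min_{1≤k≤n} |α_k|, the series Σ_{m=1}^∞ (sum(A^m)/m) z^m converges and exp(Σ_{m=1}^∞ (sum(A^m)/m) z^m) = Π_{k=1}^n (1 − z/α_k)^{A_{k,1}/((−1)^N det A)} · exp( (1/((−1)^N det A)) · Σ_{k=1}^n Σ_{j=1}^{e_k−1} (z^j/(j·(1 − z/α_k)^j)) · (Σ_{i=j}^{e_k−1} binom(i−1, j−1) · (−1)^{i−1} · (1/α_k)^{i+j} · A_{k,i+1}) ), where the complex power (1 − z/α_k)^w is taken with the principal branch. -/
open Polynomial Matrix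

-- combinatorial identity
lemma aux_comb (i : ℕ) (hi : 1 ≤ i) (z a : ℂ) (ha : a ≠ 0) (hza : 1 - z / a ≠ 0) :
    ∑ j ∈ Finset.Icc 1 i, z ^ j / (j * (1 - z / a) ^ j) *
      (((i - 1).choose (j - 1) : ℂ) * (-1) ^ (i - 1) * (1 / a) ^ (i + j)) =
    (-1 / (i : ℂ)) * (((z - a) ^ i)⁻¹ - ((-a) ^ i)⁻¹) := by
  obtain ⟨i, rfl⟩ : ∃ m, i = m + 1 := ⟨i - 1, by omega⟩
  set v := 1 - z / a with hv
  have hz : z - a = -a * v := by rw [hv]; field_simp; ring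
  have hi0 : ((i + 1 : ℕ) : ℂ) ≠ 0 := by exact_mod_cast Nat.succ_ne_zero i
  have key : (v⁻¹) ^ (i + 1) = 1 + ∑ j ∈ Finset.Icc 1 (i + 1), (z / a / v) ^ j * ((i + 1).choose j : ℂ) := by
    have h1 : v⁻¹ = z / a / v + 1 := by
      have : z / a = 1 - v := by rw [hv]; ring
      rw [this]; field_simp; ring
    rw [h1, add_pow, Finset.sum_range_succ']
    rw [show Finset.Icc 1 (i + 1) = (Finset.Icc 0 i).map (addRightEmbedding 1) by simp]
    rw [Finset.sum_map, ← Nat.range_succ_eq_Icc_zero, add_comm]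
    simp
  have h2 : (((z - a) ^ (i + 1))⁻¹ - ((-a) ^ (i + 1))⁻¹) =
      ((-a) ^ (i + 1))⁻¹ * ((v⁻¹) ^ (i + 1) - 1) := by
    rw [hz, mul_pow, mul_inv, inv_pow]; ring
  rw [h2, key, add_sub_cancel_left, Finset.mul_sum, Finset.mul_sum]
  refine Finset.sum_congr rfl fun j hj => ?_
  obtain ⟨j, rfl⟩ : ∃ m, j = m + 1 := ⟨j - 1, by simp at hj; omega⟩
  have hj0 : ((j + 1 : ℕ) : ℂ) ≠ 0 := by exact_mod_cast Nat.succ_ne_zero j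
  have hc : ((i + 1 : ℕ) : ℂ) * (i.choose j : ℂ) = ((i + 1).choose (j + 1) : ℂ) * ((j + 1 : ℕ) : ℂ) := by
    exact_mod_cast Nat.add_one_mul_choose_eq i j
  have hs : ((-a) ^ (i + 1))⁻¹ = (-1) ^ (i + 1) * (a ^ (i + 1))⁻¹ := by
    rw [neg_pow, mul_inv, ← inv_pow]; norm_num
  have hc' : ((i + 1).choose (j + 1) : ℂ) = ((i + 1 : ℕ) : ℂ) * (i.choose j : ℂ) / ((j + 1 : ℕ) : ℂ) := by
    rw [hc]; field_simp
  rw [hs, hc']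
  simp only [Nat.add_sub_cancel]
  generalize ((i + 1 : ℕ) : ℂ) = I at *
  generalize ((j + 1 : ℕ) : ℂ) = J at *
  clear_value v
  rw [div_pow (z / a) v, div_pow z a, _root_.one_div_pow]
  field_simp
  ring

section
attribute [local instance] Matrix.linftyOpNormedRing Matrix.linftyOpNormedAlgebra

lemma aux_neumann (N : ℕ) (A : Matrix (Fin N) (Fin N) ℂ) :
    ∀ᶠ z in nhds (0 : ℂ), HasSum (fun m : ℕ => z ^ m * ∑ i, ∑ j, (A ^ (m + 1)) i j)
      ((∑ i, ∑ j, (Matrix.adjugate ((1 : Matrix (Fin N) (Fin N) ℂ) - z • A) * A) i j) /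
          Matrix.det ((1 : Matrix (Fin N) (Fin N) ℂ) - z • A)) := by
  have hc : Filter.Tendsto (fun z : ℂ => ‖z • A‖) (nhds 0) (nhds 0) := by
    have : Continuous (fun z : ℂ => ‖z • A‖) := by fun_prop
    simpa using this.tendsto 0
  filter_upwards [hc.eventually (gt_mem_nhds (zero_lt_one))] with z hz
  have hsum : Summable (fun m : ℕ => (z • A) ^ m) := summable_geometric_of_norm_lt_one hz
  have h1 : (1 - z • A) * (∑' m : ℕ, (z • A) ^ m) = 1 := mul_neg_geom_series _ hz
  have hdet : (1 - z • A).det ≠ 0 := by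
    intro h0
    have := congrArg Matrix.det h1
    rw [Matrix.det_mul, h0] at this
    simp at this
  have hinv : (∑' m : ℕ, (z • A) ^ m) = (1 - z • A).det⁻¹ • (1 - z • A).adjugate := by
    have h2 := congrArg (fun M => (1 - z • A).adjugate * M) h1
    simp only [← mul_assoc, Matrix.adjugate_mul, mul_one, smul_mul_assoc, one_mul] at h2
    rw [← h2, smul_smul, inv_mul_cancel₀ hdet, one_smul]
  have h3 : HasSum (fun m : ℕ => (z • A) ^ m * A) ((∑' m : ℕ, (z • A) ^ m) * A) :=
    hsum.hasSum.mul_right A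
  rw [hinv] at h3
  have h4 : HasSum (fun m : ℕ => ∑ i, ∑ j, ((z • A) ^ m * A) i j)
     (∑ i, ∑ j, (((1 - z • A).det⁻¹ • (1 - z • A).adjugate) * A) i j) := by
    refine hasSum_sum fun i _ => hasSum_sum fun j _ => ?_
    exact (Pi.hasSum.1 (Pi.hasSum.1 h3 i) j)
  convert h4 using 1
  · ext m
    simp [_root_.smul_pow, pow_succ, Finset.mul_sum]
  · simp [Finset.mul_sum, div_eq_inv_mul]
end

lemma aux_slit (w a : ℂ) (h : ‖w‖ < ‖a‖) : 1 - w / a ∈ Complex.slitPlane := by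
  have ha : 0 < ‖a‖ := lt_of_le_of_lt (norm_nonneg _) h
  have h1 : ‖w / a‖ < 1 := by rw [norm_div, div_lt_one ha]; exact h
  left
  have := (Complex.re_le_norm (w / a)).trans_lt h1
  simp only [Complex.sub_re, Complex.one_re]
  linarith

/-- antiderivative -/
noncomputable def auxF (a : ℂ) (e : ℕ) (b : ℕ → ℂ) (w : ℂ) : ℂ :=
  b 1 * Complex.log (1 - w / a) +
    ∑ i ∈ Finset.Icc 1 (e - 1), b (i + 1) * ((-1 / (i : ℂ)) * (((w - a) ^ i)⁻¹ - ((-a) ^ i)⁻¹))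

lemma auxF_deriv (a : ℂ) (e : ℕ) (he : 1 ≤ e) (b : ℕ → ℂ) (w : ℂ) (h : ‖w‖ < ‖a‖) :
    HasDerivAt (auxF a e b) (∑ j ∈ Finset.Icc 1 e, b j / (w - a) ^ j) w := by
  have ha : a ≠ 0 := norm_pos_iff.1 (lt_of_le_of_lt (norm_nonneg _) h)
  have hs := aux_slit w a h
  have hwa : w - a ≠ 0 := by
    intro h0; rw [sub_eq_zero.1 h0] at h; exact lt_irrefl _ h
  have hwa' : a - w ≠ 0 := by
    intro h0; apply hwa; rw [← neg_sub, h0, neg_zero]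
  have hlog : HasDerivAt (fun w : ℂ => b 1 * Complex.log (1 - w / a)) (b 1 / (w - a) ^ 1) w := by
    have h1 : HasDerivAt (fun w : ℂ => 1 - w / a) (-(1 / a)) w :=
      ((hasDerivAt_id w).div_const a).const_sub 1
    refine ((h1.clog hs).const_mul (b 1)).congr_deriv ?_
    have h2 : 1 - w / a = (a - w) / a := by field_simp
    rw [h2, ← neg_sub a w]
    field_simp
  have hi : ∀ i ∈ Finset.Icc 1 (e - 1), HasDerivAt
      (fun w : ℂ => b (i + 1) * ((-1 / (i : ℂ)) * (((w - a) ^ i)⁻¹ - ((-a) ^ i)⁻¹)))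
      (b (i + 1) / (w - a) ^ (i + 1)) w := by
    intro i hi
    obtain ⟨i, rfl⟩ : ∃ m, i = m + 1 := ⟨i - 1, by simp at hi; omega⟩
    have hi0 : ((i + 1 : ℕ) : ℂ) ≠ 0 := by exact_mod_cast Nat.succ_ne_zero i
    have h1 : HasDerivAt (fun w : ℂ => (w - a) ^ (i + 1)) (((i + 1 : ℕ) : ℂ) * (w - a) ^ i * 1) w := by
      exact (((hasDerivAt_id w).sub_const a).pow (i + 1)).congr_deriv (by simp)
    have h2 := ((((h1.inv (pow_ne_zero _ hwa)).sub_const (((-a) ^ (i + 1))⁻¹)).const_mul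
      (-1 / ((i + 1 : ℕ) : ℂ))).const_mul (b (i + 1 + 1)))
    refine h2.congr_deriv ?_
    generalize ((i + 1 : ℕ) : ℂ) = I at *
    generalize w - a = u at *
    field_simp
    ring
  have := hlog.add (HasDerivAt.fun_sum hi)
  refine this.congr_deriv ?_
  obtain ⟨e, rfl⟩ : ∃ m, e = m + 1 := ⟨e - 1, by omega⟩
  rw [Nat.add_sub_cancel, ← Finset.add_sum_Ioc_eq_sum_Icc (by omega : 1 ≤ e + 1)]
  congr 1
  rw [show Finset.Ioc 1 (e + 1) = (Finset.Icc 1 e).map (addRightEmbedding 1) by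
    ext x; simp; omega]
  rw [Finset.sum_map]
  rfl

lemma auxF_zero (a : ℂ) (e : ℕ) (b : ℕ → ℂ) : auxF a e b 0 = 0 := by
  simp [auxF]

lemma aux_sum (a z : ℂ) (e : ℕ) (b : ℕ → ℂ) (ha : a ≠ 0) (hza : 1 - z / a ≠ 0) :
    ∑ j ∈ Finset.Icc 1 (e - 1),
            z ^ j / (j * (1 - z / a) ^ j) *
              ∑ i ∈ Finset.Icc j (e - 1),
                ((i - 1).choose (j - 1) : ℂ) * (-1) ^ (i - 1) * (1 / a) ^ (i + j) *
                  b (i + 1) =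
    ∑ i ∈ Finset.Icc 1 (e - 1), b (i + 1) * ((-1 / (i : ℂ)) * (((z - a) ^ i)⁻¹ - ((-a) ^ i)⁻¹)) := by
  simp_rw [Finset.mul_sum]
  rw [Finset.sum_comm' (t' := Finset.Icc 1 (e - 1)) (s' := fun i => Finset.Icc 1 i)
    (by intro x y; simp only [Finset.mem_Icc]; omega)]
  refine Finset.sum_congr rfl fun i hi => ?_
  rw [← aux_comb i (by simp at hi; omega) z a ha hza, Finset.mul_sum]
  refine Finset.sum_congr rfl fun j _ => ?_
  ring

lemma aux_main (F G : ℂ → ℂ) (s : ℕ → ℂ) (z : ℂ) (R : ℝ) (hzR : ‖z‖ < R) (hF0 : F 0 = 0)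
    (hF : ∀ w, ‖w‖ < R → HasDerivAt F (G w) w)
    (hG : ∀ᶠ w in nhds (0 : ℂ), HasSum (fun m : ℕ => w ^ m * s m) (G w)) :
    HasSum (fun m : ℕ => s m / (m + 1 : ℂ) * z ^ (m + 1)) (F z) := by
  have hR : 0 < R := lt_of_le_of_lt (norm_nonneg _) hzR
  have hd : DifferentiableOn ℂ F (Metric.ball 0 R) := fun w hw =>
    (hF w (by simpa using hw)).differentiableAt.differentiableWithinAt
  have hT := Complex.hasSum_taylorSeries_on_ball (z := z) hd (by simpa using hzR)
  have hser : HasFPowerSeriesAt G (FormalMultilinearSeries.ofScalars ℂ s) 0 := by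
    rw [hasFPowerSeriesAt_iff]
    filter_upwards [hG] with w hw
    simpa [FormalMultilinearSeries.coeff_ofScalars] using hw
  have hco : ∀ m, iteratedDeriv m G 0 / m.factorial = s m := by
    intro m
    have := hser.eq_formalMultilinearSeries hser.analyticAt.hasFPowerSeriesAt
    have := congrArg (fun p => p.coeff m) this
    simpa [FormalMultilinearSeries.coeff_ofScalars] using this.symm
  have hev : deriv F =ᶠ[nhds 0] G := by
    filter_upwards [Metric.ball_mem_nhds (0 : ℂ) hR] with w hw
    exact (hF w (by simpa using hw)).deriv
  rw [← hasSum_nat_add_iff' 1] at hT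
  simp only [Finset.sum_range_one, iteratedDeriv_zero, hF0, smul_zero, sub_zero] at hT
  suffices hfun : (fun m : ℕ => s m / (m + 1 : ℂ) * z ^ (m + 1)) =
      fun n : ℕ => ((n + 1).factorial : ℂ)⁻¹ • z ^ (n + 1) • iteratedDeriv (n + 1) F 0 by
    rw [hfun]; exact hT
  ext m
  rw [iteratedDeriv_succ', hev.iteratedDeriv_eq, ← hco, Nat.factorial_succ]
  have h1 : (m.factorial : ℂ) ≠ 0 := by exact_mod_cast m.factorial_ne_zero
  have h2 : (m + 1 : ℂ) ≠ 0 := by exact_mod_cast Nat.succ_ne_zero m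
  push_cast
  simp only [smul_eq_mul]
  field_simp

/-- With the same hypotheses as in the partial fraction setup
(`det A ≠ 0`, factorization of `det(E - A·z)`, partial fraction decomposition of
`sum(adj(E - A·z)·A)/det(E - A·z)` with coefficients `A_{k,j}`), for every complex `z`
with `|z| < min_k |α_k|` the series `Σ_{m=1}^∞ (sum(A^m)/m) z^m` converges and the zeta
function `exp(Σ_{m=1}^∞ (sum(A^m)/m) z^m)` equals the closed product/exponential formula,
where `(1 - z/α_k)^w` is the principal-branch complex power. -/
theorem zeta_function_closed_formula
    (N n : ℕ) (hN : 1 ≤ N) (A : Matrix (Fin N) (Fin N) ℂ) (hA : A.det ≠ 0)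
    (α : Fin n → ℂ) (hα : ∀ k, α k ≠ 0) (hinj : Function.Injective α)
    (e : Fin n → ℕ) (he : ∀ k, 1 ≤ e k)
    (hfact : Matrix.det ((1 : Matrix (Fin N) (Fin N) ℂ[X]) -
        (Polynomial.X : ℂ[X]) • A.map Polynomial.C) =
      Polynomial.C ((-1) ^ N * A.det) *
        ∏ k, (Polynomial.X - Polynomial.C (α k)) ^ (e k))
    (B : Fin n → ℕ → ℂ)
    (hpart : ∀ z : ℂ, (∀ k, z ≠ α k) →
      (∑ i, ∑ j, (Matrix.adjugate ((1 : Matrix (Fin N) (Fin N) ℂ) - z • A) * A) i j) /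
          Matrix.det ((1 : Matrix (Fin N) (Fin N) ℂ) - z • A) =
        (1 / ((-1) ^ N * A.det)) *
          ∑ k, ∑ j ∈ Finset.Icc 1 (e k), B k j / (z - α k) ^ j)
    (z : ℂ) (hz : ∀ k, ‖z‖ < ‖α k‖) :
    Summable (fun m : ℕ =>
      (∑ i, ∑ j, (A ^ (m + 1)) i j) / (m + 1 : ℂ) * z ^ (m + 1)) ∧
    Complex.exp (∑' m : ℕ,
        (∑ i, ∑ j, (A ^ (m + 1)) i j) / (m + 1 : ℂ) * z ^ (m + 1)) =
      (∏ k, (1 - z / α k) ^ (B k 1 / ((-1) ^ N * A.det))) *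
        Complex.exp ((1 / ((-1) ^ N * A.det)) *
          ∑ k, ∑ j ∈ Finset.Icc 1 (e k - 1),
            z ^ j / (j * (1 - z / α k) ^ j) *
              ∑ i ∈ Finset.Icc j (e k - 1),
                ((i - 1).choose (j - 1) : ℂ) * (-1) ^ (i - 1) * (1 / α k) ^ (i + j) *
                  B k (i + 1)) := by
  have hR : ∃ R : ℝ, ‖z‖ < R ∧ ∀ k, R ≤ ‖α k‖ := by
    rcases isEmpty_or_nonempty (Fin n) with h | h
    · exact ⟨‖z‖ + 1, by linarith, fun k => h.elim k⟩
    · obtain ⟨k0, hk0⟩ := Finite.exists_min (fun k => ‖α k‖)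
      exact ⟨‖α k0‖, hz k0, hk0⟩
  obtain ⟨R, hzR, hRα⟩ := hR
  have hR0 : 0 < R := lt_of_le_of_lt (norm_nonneg _) hzR
  have hmain := aux_main (fun w => (1 / ((-1) ^ N * A.det)) * ∑ k, auxF (α k) (e k) (B k) w)
    (fun w => (1 / ((-1) ^ N * A.det)) *
          ∑ k, ∑ j ∈ Finset.Icc 1 (e k), B k j / (w - α k) ^ j)
    (fun m => ∑ i, ∑ j, (A ^ (m + 1)) i j) z R hzR (by simp [auxF_zero])
    (by
      intro w hw
      exact (HasDerivAt.fun_sum fun k _ =>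
        auxF_deriv (α k) (e k) (he k) (B k) w (hw.trans_le (hRα k))).const_mul _)
    (by
      filter_upwards [aux_neumann N A, Metric.ball_mem_nhds (0 : ℂ) hR0] with w hw hwR
      rwa [hpart w] at hw
      rintro k rfl
      have : ‖α k‖ < R := by simpa using hwR
      exact absurd (hRα k) (not_le.2 this))
  refine ⟨hmain.summable, ?_⟩
  rw [hmain.tsum_eq]
  have hne : ∀ k, 1 - z / α k ≠ 0 := fun k => Complex.slitPlane_ne_zero (aux_slit z (α k) (hz k))
  have hsum : ∀ k, _ := fun k => aux_sum (α k) z (e k) (B k) (hα k) (hne k)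
  simp_rw [hsum]
  simp only [auxF, Finset.sum_add_distrib]
  rw [mul_add, Complex.exp_add]
  congr 1
  rw [Finset.mul_sum, Complex.exp_sum]
  refine Finset.prod_congr rfl fun k _ => ?_
  rw [Complex.cpow_def_of_ne_zero (hne k)]
  congr 1
  ring
end
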